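/- Let a, m, α > 0 and let η ∈ ℝ be a critical point of ξ ↦ μ₁(a,m,α;ξ) (in particular any minimizer). Let f = f_{α,η} be the positive normalized ground state of H[a,m,α;η]. Then ∫₀^∞ (t-η)|f(t)|² dt + (1/m) ∫_{-∞}^0 (t-η)|f(t)|² dt = 0. -/

import Mathlib

open MeasureTheory Set Filter Topology

noncomputable section

/-- `B¹(ℝ₊)`-type regularity on the half line (smooth core):
`u`, `u'` and `t·u` are square integrable on `(0,∞)`. -/
def MemB1p (u : ℝ → ℝ) : Prop :=
  Differentiable ℝ u ∧
  IntegrableOn (fun t => (u t)^2) (Ioi 0) ∧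
  IntegrableOn (fun t => (deriv u t)^2) (Ioi 0) ∧
  IntegrableOn (fun t => t^2 * (u t)^2) (Ioi 0)

/-- The Robin quadratic form `q[γ,ξ]` of `-d²/dt² + (t-ξ)²` on `ℝ₊`. -/
def qRobin (γ ξ : ℝ) (u : ℝ → ℝ) : ℝ :=
  (∫ t in Ioi (0:ℝ), ((deriv u t)^2 + (t - ξ)^2 * (u t)^2)) + γ * (u 0)^2

/-- squared `L²(ℝ₊)` norm. -/
def np (u : ℝ → ℝ) : ℝ := ∫ t in Ioi (0:ℝ), (u t)^2

/-- Lowest Robin eigenvalue `λ₁(γ,ξ)`, defined variationally. -/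
def lambda1 (γ ξ : ℝ) : ℝ :=
  sInf {r : ℝ | ∃ u : ℝ → ℝ, MemB1p u ∧ np u ≠ 0 ∧ r = qRobin γ ξ u / np u}

/-- Lowest Neumann eigenvalue `λ₁^N(ξ)` (Robin with `γ = 0`). -/
def lambda1N (ξ : ℝ) : ℝ := lambda1 0 ξ

/-- Lowest Dirichlet eigenvalue `λ₁^D(ξ)`, defined variationally. -/
def lambda1D (ξ : ℝ) : ℝ :=
  sInf {r : ℝ | ∃ u : ℝ → ℝ, MemB1p u ∧ u 0 = 0 ∧ np u ≠ 0 ∧ r = qRobin 0 ξ u / np u}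

/-- The de Gennes constant `Θ₀ = inf_ξ λ₁^N(ξ)`. -/
def Theta0 : ℝ := sInf (Set.range lambda1N)

/-- `B¹(ℝ)`-type regularity on the whole line (smooth core). -/
def MemB1 (u : ℝ → ℝ) : Prop :=
  Differentiable ℝ u ∧
  Integrable (fun t => (u t)^2) ∧
  Integrable (fun t => (deriv u t)^2) ∧
  Integrable (fun t => t^2 * (u t)^2)

/-- The interface quadratic form `Q[a,m,α;ξ]` on `B¹(ℝ)`. -/
def QI (a m α ξ : ℝ) (u : ℝ → ℝ) : ℝ :=
  (∫ t in Ioi (0:ℝ), ((deriv u t)^2 + (t - ξ)^2 * (u t)^2 - α * (u t)^2)) +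
  ∫ t in Iio (0:ℝ), ((1/m) * ((deriv u t)^2 + (t - ξ)^2 * (u t)^2) + a * α * (u t)^2)

/-- squared `L²(ℝ)` norm. -/
def nR (u : ℝ → ℝ) : ℝ := ∫ t, (u t)^2

/-- Ground state energy `μ₁(a,m,α;ξ)` of the interface operator, defined variationally. -/
def mu1 (a m α ξ : ℝ) : ℝ :=
  sInf {r : ℝ | ∃ u : ℝ → ℝ, MemB1 u ∧ nR u ≠ 0 ∧ r = QI a m α ξ u / nR u}

/-!
The form depends on `ξ` through `(t - ξ)²` only, so its second difference in `ξ` is `O(ε²) ‖u‖²` and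
`μ₁` is semiconcave. It therefore suffices to bound `μ₁(η + ε)` from below to first order. On each
half-line, completing the square in `(u' - ψ u)² ≥ 0` bounds the form from below by means of a
function `ψ` with `ψ' + ψ² + L ≤ (t - ξ)²`. At `ξ = η` the logarithmic derivative `f' / f` is such
a `ψ`, with equality. Correcting it to first order in `ε` costs `O(ε²)` in `L`, and the transmission
condition survives the correction exactly when `L` moves at the rate `-2 M / ‖f‖²`, where `M` is the
weighted first moment. This gives the Feynman–Hellmann formula `μ₁'(η) = -2 M / ‖f‖²`, so `M = 0` at
a critical point. The upper bound comes from semiconcavity rather than from `f` as a trial function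
because `f`, having a kink at `0`, is not in the domain of differentiable test functions.
-/

section RealAnalysis

lemma le_of_deriv_pos_of_eq {w w' : ℝ → ℝ} {a p : ℝ} (hw : ∀ t, a ≤ t → HasDerivAt w (w' t) t)
    (ha : p ≤ w a) (hbarrier : ∀ t, a ≤ t → w t = p → 0 < w' t) {t : ℝ} (ht : a ≤ t) : p ≤ w t := by
  refine neg_le_neg_iff.1 (image_le_of_deriv_right_lt_deriv_boundary' (f := fun s => -w s)
    (f' := fun s => -w' s) (B := fun _ => -p) (B' := fun _ => 0) (b := t) ?_
    (fun s hs => (hw s hs.1).neg.hasDerivWithinAt) (neg_le_neg ha) continuousOn_const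
    (fun s _ => hasDerivWithinAt_const s _ _) (fun s hs heq => ?_) ⟨ht, le_rfl⟩)
  · exact fun s hs => (hw s hs.1).continuousAt.neg.continuousWithinAt
  · exact neg_neg_iff_pos.2 (hbarrier s hs.1 (neg_injective heq))

lemma exists_pos_of_le_deriv {w w' : ℝ → ℝ} {a δ : ℝ} (hδ : 0 < δ)
    (hw : ∀ t, a ≤ t → HasDerivAt w (w' t) t) (hw' : ∀ t, a ≤ t → δ ≤ w' t) :
    ∃ t, a ≤ t ∧ 0 < w t := by
  have hgrowth : ∀ t, a ≤ t → w a + δ * (t - a) ≤ w t := fun t ht => by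
    have := (convex_Ici a).mul_sub_le_image_sub_of_le_deriv (C := δ)
      (fun s hs => (hw s hs).continuousAt.continuousWithinAt)
      (fun s hs => (hw s (interior_subset hs)).differentiableAt.differentiableWithinAt)
      (fun s hs => (hw s (interior_subset hs)).deriv ▸ hw' s (interior_subset hs))
      a self_mem_Ici t ht ht
    linarith
  have hta : a ≤ a + (|w a| + 1) / δ := le_add_of_nonneg_right (by positivity)
  refine ⟨_, hta, lt_of_lt_of_le ?_ (hgrowth _ hta)⟩
  rw [add_sub_cancel_left, mul_div_cancel₀ _ hδ.ne']
  linarith [neg_abs_le (w a)]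

lemma not_integrableOn_Ioi_of_const_le {h : ℝ → ℝ} {a δ : ℝ} (hδ : 0 < δ)
    (hh : ∀ t, a ≤ t → δ ≤ h t) : ¬ IntegrableOn h (Ioi a) := fun hi => by
  have hconst : IntegrableOn (fun _ : ℝ => δ) (Ioi a) :=
    Integrable.mono' hi aestronglyMeasurable_const <|
      ae_restrict_of_forall_mem measurableSet_Ioi fun t ht => by
        rw [Real.norm_of_nonneg hδ.le]
        exact hh t (le_of_lt ht)
  simp [integrableOn_const_iff, hδ.ne'] at hconst

lemma integrableOn_Ioi_and_integral_le_of_le_neg_deriv {F F' h : ℝ → ℝ} {a : ℝ}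
    (hF : ∀ t, a ≤ t → HasDerivAt F (F' t) t) (hF0 : ∀ t, a ≤ t → 0 ≤ F t)
    (hcont : ContinuousOn h (Ici a)) (h0 : ∀ t, a ≤ t → 0 ≤ h t)
    (hle : ∀ t, a ≤ t → h t ≤ -F' t) :
    IntegrableOn h (Ioi a) ∧ ∫ t in Ioi a, h t ≤ F a := by
  have hbound : ∀ b, a ≤ b → ∫ t in a..b, h t ≤ F a := fun b hb => by
    have := intervalIntegral.sub_le_integral_of_hasDeriv_right_of_le hb
      (g := F) (g' := F') (φ := fun t => -h t)
      (fun t ht => (hF t ht.1).continuousAt.continuousWithinAt)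
      (fun t ht => (hF t ht.1.le).hasDerivWithinAt)
      (hcont.mono Icc_subset_Ici_self).neg.integrableOn_Icc
      (fun t ht => by linarith [hle t ht.1.le])
    rw [intervalIntegral.integral_neg] at this
    linarith [hF0 b hb]
  have hint : IntegrableOn h (Ioi a) := by
    refine integrableOn_Ioi_of_intervalIntegral_norm_bounded (F a) a (fun b =>
      (hcont.mono Icc_subset_Ici_self).integrableOn_Icc.mono_set Ioc_subset_Icc_self)
      tendsto_id ?_
    filter_upwards [eventually_ge_atTop a] with b hb
    refine (intervalIntegral.integral_congr fun t ht => ?_).trans_le (hbound b hb)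
    rw [id, uIcc_of_le hb] at ht
    exact Real.norm_of_nonneg (h0 t ht.1)
  exact ⟨hint, le_of_tendsto (intervalIntegral_tendsto_integral_Ioi a hint tendsto_id) <|
    (eventually_ge_atTop a).mono hbound⟩

lemma hasDerivAt_integral_Ioi {h : ℝ → ℝ} {a t : ℝ} (hint : IntegrableOn h (Ioi a))
    (hcont : ContinuousOn h (Ioi a)) (ht : a < t) :
    HasDerivAt (fun x => ∫ s in Ioi x, h s) (-h t) t := by
  have hprimitive := intervalIntegral.integral_hasDerivAt_right
    ((intervalIntegrable_iff_integrableOn_Ioc_of_le ht.le).2 (hint.mono_set Ioc_subset_Ioi_self))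
    (hcont.stronglyMeasurableAtFilter isOpen_Ioi t ht) (hcont.continuousAt (Ioi_mem_nhds ht))
  refine (hprimitive.const_sub (∫ s in Ioi a, h s)).congr_of_eventuallyEq ?_
  filter_upwards [lt_mem_nhds ht] with x hx
  rw [← intervalIntegral.integral_Ioi_sub_Ioi hint hx.le, sub_sub_cancel]

lemma integral_Iio_zero_eq_integral_Ioi_comp_neg (h : ℝ → ℝ) :
    ∫ t in Iio (0 : ℝ), h t = ∫ t in Ioi (0 : ℝ), h (-t) := by
  rw [integral_comp_neg_Ioi, neg_zero, integral_Iic_eq_integral_Iio]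

lemma hasDerivAt_of_quadratic_bounds {F : ℝ → ℝ} {x d C K : ℝ}
    (hlower : ∀ h, F x + d * h - C * h ^ 2 ≤ F (x + h))
    (hmid : ∀ h, F (x + h) + F (x - h) ≤ 2 * F x + K * h ^ 2) : HasDerivAt F d x := by
  rw [hasDerivAt_iff_isLittleO_nhds_zero]
  refine Asymptotics.IsBigO.trans_isLittleO (g := fun h : ℝ => h ^ 2)
    (.of_bound (|C| + |K|) <| Eventually.of_forall fun h => ?_)
    (Asymptotics.isLittleO_pow_id one_lt_two)
  have hreflected := hlower (-h)
  rw [← sub_eq_add_neg, neg_sq] at hreflected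
  have hC := mul_le_mul_of_nonneg_right (le_abs_self C) (sq_nonneg h)
  have hK := mul_le_mul_of_nonneg_right (le_abs_self K) (sq_nonneg h)
  have hK0 := mul_nonneg (abs_nonneg K) (sq_nonneg h)
  rw [Real.norm_eq_abs, Real.norm_of_nonneg (sq_nonneg h), smul_eq_mul, abs_le]
  constructor <;> linarith [hlower h, hmid h]

end RealAnalysis

section TestFunctions

lemma MemB1.memB1p {u : ℝ → ℝ} (hu : MemB1 u) : MemB1p u :=
  ⟨hu.1, hu.2.1.integrableOn, hu.2.2.1.integrableOn, hu.2.2.2.integrableOn⟩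

lemma MemB1.comp_neg {u : ℝ → ℝ} (hu : MemB1 u) : MemB1 (fun t => u (-t)) := by
  obtain ⟨hd, hsq, hderiv, hmul⟩ := hu
  refine ⟨hd.comp differentiable_neg, hsq.comp_neg, ?_, ?_⟩
  · simpa only [deriv_comp_neg, neg_sq] using hderiv.comp_neg
  · simpa only [neg_sq] using hmul.comp_neg

lemma MemB1p.integrableOn_sub_sq_mul_sq {u : ℝ → ℝ} (hu : MemB1p u) (ξ : ℝ) :
    IntegrableOn (fun t => (t - ξ) ^ 2 * u t ^ 2) (Ioi 0) := by
  obtain ⟨hd, hsq, -, hmul⟩ := hu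
  refine ((hmul.const_mul 2).add (hsq.const_mul (2 * ξ ^ 2))).mono' ?_ <|
    Eventually.of_forall fun t => ?_
  · exact (((continuous_id.sub continuous_const).pow 2).mul
      (hd.continuous.pow 2)).aestronglyMeasurable
  · rw [Real.norm_of_nonneg (by positivity)]
    calc (t - ξ) ^ 2 * u t ^ 2 ≤ (2 * (t ^ 2 + ξ ^ 2)) * u t ^ 2 := by
          gcongr
          linarith [sq_nonneg (t + ξ)]
      _ = 2 * (t ^ 2 * u t ^ 2) + 2 * ξ ^ 2 * u t ^ 2 := by ring

lemma MemB1p.integrableOn_qRobin {u : ℝ → ℝ} (hu : MemB1p u) (ξ : ℝ) :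
    IntegrableOn (fun t => deriv u t ^ 2 + (t - ξ) ^ 2 * u t ^ 2) (Ioi 0) :=
  hu.2.2.1.add (hu.integrableOn_sub_sq_mul_sq ξ)

lemma MemB1p.tendsto_one_add_mul_sq {u : ℝ → ℝ} (hu : MemB1p u) :
    Tendsto (fun t => (1 + t) * u t ^ 2) atTop (𝓝 0) := by
  obtain ⟨hd, hsq, hderiv, -⟩ := id hu
  have hweight : IntegrableOn (fun t => (1 + t) ^ 2 * u t ^ 2) (Ioi 0) := by
    simpa only [sub_neg_eq_add, add_comm] using hu.integrableOn_sub_sq_mul_sq (-1)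
  have hprod : IntegrableOn (fun t => (1 + t) * u t ^ 2) (Ioi 0) := by
    refine hweight.mono' (((continuous_const.add continuous_id).mul
      (hd.continuous.pow 2)).aestronglyMeasurable) ?_
    refine ae_restrict_of_forall_mem measurableSet_Ioi fun t (ht : 0 < t) => ?_
    rw [Real.norm_of_nonneg (by positivity)]
    gcongr
    nlinarith
  have hcross : IntegrableOn (fun t => (1 + t) * (2 * u t * deriv u t)) (Ioi 0) := by
    refine (hweight.add hderiv).mono' ?_ <| Eventually.of_forall fun t => ?_
    · exact ((measurable_const.add measurable_id).mul
        ((hd.continuous.measurable.const_mul 2).mul (measurable_deriv u))).aestronglyMeasurable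
    · rw [Real.norm_eq_abs, abs_le]
      simp only [Pi.add_apply]
      constructor <;> nlinarith [sq_nonneg ((1 + t) * u t + deriv u t),
        sq_nonneg ((1 + t) * u t - deriv u t)]
  have hderivative : ∀ t, HasDerivAt (fun t => (1 + t) * u t ^ 2)
      (u t ^ 2 + (1 + t) * (2 * u t * deriv u t)) t := fun t => by
    simpa using ((hasDerivAt_id t).const_add 1).fun_mul ((hd t).hasDerivAt.fun_pow 2)
  exact tendsto_zero_of_hasDerivAt_of_integrableOn_Ioi (fun t _ => hderivative t)
    (hsq.add hcross) hprod

lemma np_nonneg (u : ℝ → ℝ) : 0 ≤ np u := integral_nonneg fun _ => sq_nonneg _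

lemma qRobin_zero_nonneg (ξ : ℝ) (u : ℝ → ℝ) : 0 ≤ qRobin 0 ξ u := by
  rw [qRobin, zero_mul, add_zero]
  exact integral_nonneg fun t => by positivity

lemma MemB1p.qRobin_add_add_qRobin_sub {u : ℝ → ℝ} (hu : MemB1p u) (γ ξ ε : ℝ) :
    qRobin γ (ξ + ε) u + qRobin γ (ξ - ε) u = 2 * qRobin γ ξ u + 2 * ε ^ 2 * np u := by
  have hsum : (∫ t in Ioi (0 : ℝ), (deriv u t ^ 2 + (t - (ξ + ε)) ^ 2 * u t ^ 2)) +
      (∫ t in Ioi (0 : ℝ), (deriv u t ^ 2 + (t - (ξ - ε)) ^ 2 * u t ^ 2)) =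
      2 * (∫ t in Ioi (0 : ℝ), (deriv u t ^ 2 + (t - ξ) ^ 2 * u t ^ 2)) + 2 * ε ^ 2 * np u := by
    rw [np, ← integral_add (hu.integrableOn_qRobin _) (hu.integrableOn_qRobin _),
      ← integral_const_mul, ← integral_const_mul,
      ← integral_add ((hu.integrableOn_qRobin _).const_mul _) (hu.2.1.const_mul _)]
    congr 1 with t
    ring
  simp only [qRobin]
  linarith

end TestFunctions

section Barta

variable {u ψ ψ' V : ℝ → ℝ} {L p B : ℝ}

lemma MemB1p.sub_le_integral_of_riccati (hu : MemB1p u)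
    (hV : IntegrableOn (fun t => V t * u t ^ 2) (Ioi 0))
    (hψ : ∀ t, 0 < t → HasDerivAt ψ (ψ' t) t)
    (hriccati : ∀ t, 0 < t → ψ' t + ψ t ^ 2 + L ≤ V t) {a b : ℝ} (ha : 0 < a) (hab : a ≤ b) :
    ψ b * u b ^ 2 - ψ a * u a ^ 2 ≤
      ∫ t in a..b, (deriv u t ^ 2 + V t * u t ^ 2 - L * u t ^ 2) := by
  have hpos : ∀ t, a ≤ t → 0 < t := fun t => ha.trans_le
  have hderiv : ∀ t, a ≤ t → HasDerivAt (fun t => ψ t * u t ^ 2)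
      (ψ' t * u t ^ 2 + ψ t * (2 * u t * deriv u t)) t := fun t ht => by
    simpa using (hψ t (hpos t ht)).fun_mul ((hu.1 t).hasDerivAt.fun_pow 2)
  refine intervalIntegral.sub_le_integral_of_hasDeriv_right_of_le hab
    (fun t ht => (hderiv t ht.1).continuousAt.continuousWithinAt)
    (fun t ht => (hderiv t ht.1.le).hasDerivWithinAt)
    (((hu.2.2.1.add hV).sub (hu.2.1.const_mul L)).mono_set fun t ht => hpos t ht.1) fun t ht => ?_
  have := mul_le_mul_of_nonneg_right (hriccati t (hpos t ht.1.le)) (sq_nonneg (u t))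
  linarith [sq_nonneg (deriv u t - ψ t * u t)]

-- Completing the square in `(u' - ψ u)² ≥ 0` bounds the form from below by `∫ (ψ u²)'`; the linear
-- lower bound on `ψ` is what discards the boundary term at infinity.
theorem MemB1p.mul_np_le_of_riccati (hu : MemB1p u)
    (hV : IntegrableOn (fun t => V t * u t ^ 2) (Ioi 0))
    (hψ0 : Tendsto ψ (𝓝[>] 0) (𝓝 p))
    (hψ : ∀ t, 0 < t → HasDerivAt ψ (ψ' t) t)
    (hriccati : ∀ t, 0 < t → ψ' t + ψ t ^ 2 + L ≤ V t)
    (hlower : ∀ᶠ t in atTop, -(B * (1 + t)) ≤ ψ t) :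
    L * np u ≤ (∫ t in Ioi (0 : ℝ), (deriv u t ^ 2 + V t * u t ^ 2)) + p * u 0 ^ 2 := by
  have hform : IntegrableOn (fun t => deriv u t ^ 2 + V t * u t ^ 2) (Ioi 0) := hu.2.2.1.add hV
  have hint : IntegrableOn (fun t => deriv u t ^ 2 + V t * u t ^ 2 - L * u t ^ 2) (Ioi 0) :=
    hform.sub (hu.2.1.const_mul L)
  have htail : ∀ a, 0 < a → -(ψ a * u a ^ 2) ≤
      ∫ t in Ioi a, (deriv u t ^ 2 + V t * u t ^ 2 - L * u t ^ 2) := fun a ha => by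
    have hboundary := (hu.tendsto_one_add_mul_sq.const_mul (-B)).sub_const (ψ a * u a ^ 2)
    rw [mul_zero, zero_sub] at hboundary
    refine le_of_tendsto_of_tendsto hboundary (intervalIntegral_tendsto_integral_Ioi a
      (hint.mono_set (Ioi_subset_Ioi ha.le)) tendsto_id) ?_
    filter_upwards [hlower, eventually_ge_atTop a] with b hψb hab
    refine le_trans ?_ (hu.sub_le_integral_of_riccati hV hψ hriccati ha hab)
    rw [id]
    linarith [mul_le_mul_of_nonneg_right hψb (sq_nonneg (u b))]
  have hzero : -(p * u 0 ^ 2) ≤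
      ∫ t in Ioi (0 : ℝ), (deriv u t ^ 2 + V t * u t ^ 2 - L * u t ^ 2) := by
    have hu0 : Tendsto u (𝓝[>] 0) (𝓝 (u 0)) := hu.1.continuous.continuousWithinAt
    exact le_of_tendsto_of_tendsto (hψ0.mul (hu0.pow 2)).neg
      (hint.continuousWithinAt_Ici_primitive_Ioi.mono Ioi_subset_Ici_self)
      (eventually_mem_nhdsWithin.mono htail)
  rw [integral_sub hform (hu.2.1.const_mul L), integral_const_mul] at hzero
  rw [np]
  linarith

end Barta

section Riccati

variable {ψ : ℝ → ℝ} {η c : ℝ}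

lemma eventually_abs_add_two_le_sub (η c : ℝ) : ∀ᶠ t in atTop, 0 < t ∧ |c| + 2 ≤ t - η := by
  filter_upwards [eventually_gt_atTop 0, eventually_ge_atTop (η + (|c| + 2))] with t ht hle
  exact ⟨ht, by linarith⟩

-- Below `-2 (t - η)` the negative function `1 / ψ` has derivative at least `1 / 2`.
lemma eventually_neg_two_mul_le_of_riccati
    (hψ : ∀ t, 0 < t → HasDerivAt ψ ((t - η) ^ 2 - c - ψ t ^ 2) t) :
    ∀ᶠ t in atTop, -(2 * (t - η)) ≤ ψ t := by
  obtain ⟨T, hT⟩ := eventually_atTop.1 (eventually_abs_add_two_le_sub η c)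
  filter_upwards [eventually_ge_atTop T] with t₀ ht₀
  by_contra! hlt
  have hlarge : ∀ t, t₀ ≤ t → 2 ≤ t - η ∧ |c| + 2 ≤ (t - η) ^ 2 := fun t ht => by
    have := (hT t (ht₀.trans ht)).2
    have := abs_nonneg c
    exact ⟨by linarith, by nlinarith⟩
  have hder : ∀ t, t₀ ≤ t → HasDerivAt ψ ((t - η) ^ 2 - c - ψ t ^ 2) t := fun t ht =>
    hψ t (hT t (ht₀.trans ht)).1
  have hstay : ∀ t, t₀ ≤ t → ψ t ≤ -(2 * (t - η)) := fun t ht => by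
    have := le_of_deriv_pos_of_eq (p := 0) (w := fun t => -(ψ t + 2 * (t - η)))
      (fun s hs => ((hder s hs).fun_add (((hasDerivAt_id s).sub_const η).const_mul 2)).fun_neg)
      (by linarith) (fun s hs heq => by
        have hψs : ψ s = -(2 * (s - η)) := by linarith
        rw [hψs]
        nlinarith [hlarge s hs, neg_abs_le c]) ht
    linarith
  have hneg : ∀ t, t₀ ≤ t → ψ t < 0 := fun t ht => by linarith [hstay t ht, hlarge t ht]
  obtain ⟨t, ht, hpos⟩ := exists_pos_of_le_deriv (w := fun t => (ψ t)⁻¹) one_half_pos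
    (fun t ht => (hder t ht).fun_inv (hneg t ht).ne) (fun t ht => by
      rw [le_div_iff₀ (sq_pos_of_neg (hneg t ht))]
      nlinarith [hlarge t ht, hstay t ht, neg_abs_le c])
  exact hpos.not_gt (inv_neg''.2 (hneg t ht))

lemma eventually_le_neg_half_or_eventually_nonneg_of_riccati
    (hψ : ∀ t, 0 < t → HasDerivAt ψ ((t - η) ^ 2 - c - ψ t ^ 2) t) :
    (∀ᶠ t in atTop, ψ t ≤ -((t - η) / 2)) ∨ ∀ᶠ t in atTop, 0 ≤ ψ t := by
  obtain ⟨T, hT⟩ := eventually_atTop.1 (eventually_abs_add_two_le_sub η c)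
  have hder : ∀ t, T ≤ t → HasDerivAt ψ ((t - η) ^ 2 - c - ψ t ^ 2) t := fun t ht =>
    hψ t (hT t ht).1
  have hlarge : ∀ t, T ≤ t → 0 < t - η ∧ 1 + (t - η) ^ 2 / 4 ≤ (t - η) ^ 2 - c := fun t ht => by
    have := (hT t ht).2
    have := abs_nonneg c
    exact ⟨by linarith, by nlinarith [le_abs_self c]⟩
  by_cases! hsign : ∃ t₁, T ≤ t₁ ∧ 0 ≤ ψ t₁
  · obtain ⟨t₁, ht₁, hψt₁⟩ := hsign
    right
    filter_upwards [eventually_ge_atTop t₁] with t ht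
    refine le_of_deriv_pos_of_eq (fun s hs => hder s (ht₁.trans hs)) hψt₁ (fun s hs heq => ?_) ht
    rw [heq]
    nlinarith [hlarge s (ht₁.trans hs)]
  · left
    filter_upwards [eventually_ge_atTop T] with t₀ ht₀
    by_contra! hlt
    have hstay : ∀ t, t₀ ≤ t → -((t₀ - η) / 2) ≤ ψ t := fun t ht => by
      refine le_of_deriv_pos_of_eq (fun s hs => hder s (ht₀.trans hs)) hlt.le
        (fun s hs heq => ?_) ht
      rw [heq]
      nlinarith [hlarge s (ht₀.trans hs), hlarge t₀ ht₀]
    obtain ⟨t, ht, hpos⟩ := exists_pos_of_le_deriv one_pos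
      (fun s hs => hder s (ht₀.trans hs)) (fun s hs => by
        nlinarith [hlarge s (ht₀.trans hs), hlarge t₀ ht₀, hstay s hs,
          hsign s (ht₀.trans hs)])
    exact hpos.not_gt (hsign t (ht₀.trans ht))

end Riccati

section HalfLine

/-- A positive square-integrable solution `f` of `-∂ₜ² f + (t - η)² f = c f` on `[0, ∞)`. The
derivative of `f` on `(0, ∞)` is recorded as `g` and its limit at `0` as `d`, so that nothing is
required of `f` on the other side of `0`. -/
structure IsHalfLineGroundState (η c d : ℝ) (f g : ℝ → ℝ) : Prop where
  continuousOn : ContinuousOn f (Ici 0)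
  pos : ∀ t, 0 ≤ t → 0 < f t
  integrableOn_sq : IntegrableOn (fun t => f t ^ 2) (Ioi 0)
  hasDerivAt : ∀ t, 0 < t → HasDerivAt f (g t) t
  hasDerivAt_deriv : ∀ t, 0 < t → HasDerivAt g (((t - η) ^ 2 - c) * f t) t
  tendsto_deriv : Tendsto g (𝓝[>] 0) (𝓝 d)

/-- The first moment of `f²` about `ζ` over `(t, ∞)`. -/
def tailMoment (ζ : ℝ) (f : ℝ → ℝ) (t : ℝ) : ℝ := ∫ s in Ioi t, (s - ζ) * f s ^ 2

/-- The first-order variation in `ε` of the logarithmic derivative `f' / f` of a half-line ground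
state when `η` moves to `η + ε` and the energy `c` to `c - 2 (ζ - η) ε`; it is the solution of the
linearized Riccati equation singled out by its boundedness at infinity. -/
def logDerivVariation (ζ : ℝ) (f : ℝ → ℝ) (t : ℝ) : ℝ := 2 * tailMoment ζ f t / f t ^ 2

lemma tailMoment_neg_comp_neg_zero (ζ : ℝ) (f : ℝ → ℝ) :
    tailMoment (-ζ) (fun t => f (-t)) 0 = -∫ t in Iio (0 : ℝ), (t - ζ) * f t ^ 2 := by
  rw [tailMoment, integral_Iio_zero_eq_integral_Ioi_comp_neg, ← integral_neg]
  congr 1 with t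
  ring

namespace IsHalfLineGroundState

variable {η c d : ℝ} {f g : ℝ → ℝ}

lemma hasDerivAt_div (h : IsHalfLineGroundState η c d f g) {t : ℝ} (ht : 0 < t) :
    HasDerivAt (fun t => g t / f t) ((t - η) ^ 2 - c - (g t / f t) ^ 2) t := by
  have hft := (h.pos t ht.le).ne'
  refine ((h.hasDerivAt_deriv t ht).fun_div (h.hasDerivAt t ht) hft).congr_deriv ?_
  field_simp

lemma tendsto_div (h : IsHalfLineGroundState η c d f g) :
    Tendsto (fun t => g t / f t) (𝓝[>] 0) (𝓝 (d / f 0)) :=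
  h.tendsto_deriv.div ((h.continuousOn 0 self_mem_Ici).mono Ioi_subset_Ici_self)
    (h.pos 0 le_rfl).ne'

lemma eventually_div_le (h : IsHalfLineGroundState η c d f g) :
    ∀ᶠ t in atTop, g t / f t ≤ -((t - η) / 2) := by
  refine (eventually_le_neg_half_or_eventually_nonneg_of_riccati
    fun t ht => h.hasDerivAt_div ht).resolve_right fun hnonneg => ?_
  obtain ⟨t₁, ht₁⟩ := eventually_atTop.1 (hnonneg.and (eventually_gt_atTop 0))
  have hderiv : ∀ t, t₁ ≤ t → HasDerivAt f (g t) t := fun t ht => h.hasDerivAt t (ht₁ t ht).2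
  have hmono : MonotoneOn f (Ici t₁) := by
    refine monotoneOn_of_hasDerivWithinAt_nonneg (convex_Ici t₁)
      (fun t ht => (hderiv t ht).continuousAt.continuousWithinAt)
      (fun t ht => (hderiv t (interior_subset ht)).hasDerivWithinAt) fun t ht => ?_
    obtain ⟨hquot, ht0⟩ := ht₁ t (interior_subset ht)
    simpa [(h.pos t ht0.le).ne'] using mul_nonneg hquot (h.pos t ht0.le).le
  have ht₁0 := (ht₁ t₁ le_rfl).2
  refine not_integrableOn_Ioi_of_const_le (pow_pos (h.pos t₁ ht₁0.le) 2) (fun t ht => ?_)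
    (h.integrableOn_sq.mono_set (Ioi_subset_Ioi ht₁0.le))
  exact pow_le_pow_left₀ (h.pos t₁ ht₁0.le).le (hmono self_mem_Ici ht ht) 2

lemma continuousOn_sub_mul_sq (h : IsHalfLineGroundState η c d f g) (ζ : ℝ) :
    ContinuousOn (fun t => (t - ζ) * f t ^ 2) (Ici 0) :=
  (continuousOn_id.sub continuousOn_const).mul (h.continuousOn.pow 2)

lemma np_pos (h : IsHalfLineGroundState η c d f g) : 0 < np f := by
  rw [np, setIntegral_pos_iff_support_of_nonneg_ae (Eventually.of_forall fun _ => sq_nonneg _)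
    h.integrableOn_sq]
  have hsupport : Ioi 0 ⊆ Function.support fun t => f t ^ 2 := fun t ht =>
    (pow_pos (h.pos t (le_of_lt ht)) 2).ne'
  rw [inter_eq_self_of_subset_right hsupport, Real.volume_Ioi]
  exact ENNReal.zero_lt_top

lemma eventually_integrableOn_and_tailMoment_le (h : IsHalfLineGroundState η c d f g) :
    ∀ᶠ t in atTop, IntegrableOn (fun s => (s - η) * f s ^ 2) (Ioi t) ∧
      tailMoment η f t ≤ f t ^ 2 := by
  obtain ⟨T, hT⟩ := eventually_atTop.1
    (h.eventually_div_le.and ((eventually_gt_atTop 0).and (eventually_ge_atTop η)))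
  filter_upwards [eventually_ge_atTop T] with t ht
  have hlarge := fun s (hs : t ≤ s) => hT s (ht.trans hs)
  refine integrableOn_Ioi_and_integral_le_of_le_neg_deriv
    (fun s hs => (h.hasDerivAt s (hlarge s hs).2.1).fun_pow 2) (fun s _ => sq_nonneg _)
    ((h.continuousOn_sub_mul_sq η).mono (Ici_subset_Ici.2 (hlarge t le_rfl).2.1.le))
    (fun s hs => mul_nonneg (sub_nonneg.2 (hlarge s hs).2.2) (sq_nonneg _)) fun s hs => ?_
  obtain ⟨hquot, hs0, -⟩ := hlarge s hs
  have hfs := h.pos s hs0.le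
  rw [div_le_iff₀ hfs] at hquot
  simp only [Nat.cast_ofNat, Nat.add_one_sub_one, pow_one]
  linarith [mul_le_mul_of_nonneg_left hquot hfs.le]

lemma integrableOn_sub_mul_sq (h : IsHalfLineGroundState η c d f g) (ζ : ℝ) :
    IntegrableOn (fun t => (t - ζ) * f t ^ 2) (Ioi 0) := by
  obtain ⟨T, ⟨htail, -⟩, hT⟩ :=
    (h.eventually_integrableOn_and_tailMoment_le.and (eventually_ge_atTop 0)).exists
  have hη : IntegrableOn (fun t => (t - η) * f t ^ 2) (Ioi 0) := by
    rw [← Ioc_union_Ioi_eq_Ioi hT]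
    exact (((h.continuousOn_sub_mul_sq η).mono Icc_subset_Ici_self).integrableOn_Icc.mono_set
      Ioc_subset_Icc_self).union htail
  refine (hη.add (h.integrableOn_sq.const_mul (η - ζ))).congr_fun (fun t _ => ?_) measurableSet_Ioi
  change (t - η) * f t ^ 2 + (η - ζ) * f t ^ 2 = _
  ring

lemma tailMoment_add_zero (h : IsHalfLineGroundState η c d f g) (ζ N : ℝ) :
    tailMoment (ζ + N) f 0 = tailMoment ζ f 0 - N * np f := by
  rw [tailMoment, tailMoment, np, ← integral_const_mul,
    ← integral_sub (h.integrableOn_sub_mul_sq ζ) (h.integrableOn_sq.const_mul N)]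
  congr 1 with t
  ring

lemma hasDerivAt_logDerivVariation (h : IsHalfLineGroundState η c d f g) (ζ : ℝ) {t : ℝ}
    (ht : 0 < t) : HasDerivAt (logDerivVariation ζ f)
      (-(2 * (t - ζ)) - 2 * (g t / f t) * logDerivVariation ζ f t) t := by
  have hft := (h.pos t ht.le).ne'
  have hmoment : HasDerivAt (tailMoment ζ f) (-((t - ζ) * f t ^ 2)) t :=
    hasDerivAt_integral_Ioi (h.integrableOn_sub_mul_sq ζ)
      ((h.continuousOn_sub_mul_sq ζ).mono Ioi_subset_Ici_self) ht
  refine ((hmoment.const_mul 2).fun_div ((h.hasDerivAt t ht).fun_pow 2)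
    (pow_ne_zero 2 hft)).congr_deriv ?_
  rw [logDerivVariation]
  simp only [Nat.cast_ofNat, Nat.add_one_sub_one, pow_one]
  field_simp

lemma continuousOn_logDerivVariation (h : IsHalfLineGroundState η c d f g) (ζ : ℝ) :
    ContinuousOn (logDerivVariation ζ f) (Ici 0) :=
  (continuousOn_const.mul (h.integrableOn_sub_mul_sq ζ).continuousOn_Ici_primitive_Ioi).div
    (h.continuousOn.pow 2) fun t ht => pow_ne_zero 2 (h.pos t ht).ne'

lemma eventually_abs_logDerivVariation_le (h : IsHalfLineGroundState η c d f g) (ζ : ℝ) :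
    ∀ᶠ t in atTop, |logDerivVariation ζ f t| ≤ 4 := by
  filter_upwards [h.eventually_integrableOn_and_tailMoment_le, eventually_ge_atTop 0,
    eventually_ge_atTop (η + |ζ - η|)] with t ⟨hint, hle⟩ ht0 ht
  have hbound : |tailMoment ζ f t| ≤ 2 * tailMoment η f t := by
    rw [← Real.norm_eq_abs, tailMoment, tailMoment, ← integral_const_mul]
    refine norm_integral_le_of_norm_le (hint.const_mul 2) <|
      ae_restrict_of_forall_mem measurableSet_Ioi fun s (hs : t < s) => ?_
    rw [norm_mul, Real.norm_of_nonneg (sq_nonneg (f s)), ← mul_assoc, Real.norm_eq_abs]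
    refine mul_le_mul_of_nonneg_right (abs_le.2 ?_) (sq_nonneg _)
    constructor <;> linarith [le_abs_self (ζ - η), neg_abs_le (ζ - η)]
  have hft : 0 < f t ^ 2 := pow_pos (h.pos t ht0) 2
  rw [logDerivVariation, abs_div, abs_mul, abs_two, abs_of_pos hft, div_le_iff₀ hft]
  linarith

lemma exists_abs_logDerivVariation_le (h : IsHalfLineGroundState η c d f g) (ζ : ℝ) :
    ∃ K, ∀ t, 0 ≤ t → |logDerivVariation ζ f t| ≤ K := by
  obtain ⟨T, hT⟩ := eventually_atTop.1 (h.eventually_abs_logDerivVariation_le ζ)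
  obtain ⟨K, hK⟩ := isCompact_Icc.exists_bound_of_continuousOn
    ((h.continuousOn_logDerivVariation ζ).mono (Icc_subset_Ici_self : Icc 0 T ⊆ Ici 0))
  refine ⟨max K 4, fun t ht => ?_⟩
  rcases le_total t T with htT | hTt
  · exact (hK t ⟨ht, htT⟩).trans (le_max_left K 4)
  · exact (hT t hTt).trans (le_max_right K 4)

-- With `k` the variation, `g / f + ε k` fails the Riccati equation at `η + ε` only by
-- `ε² (k² - 1)`.
theorem exists_forall_mul_np_le_qRobin (h : IsHalfLineGroundState η c d f g) (N : ℝ) :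
    ∃ C, 0 ≤ C ∧ ∀ ε u, MemB1p u → (c - 2 * ε * N - C * ε ^ 2) * np u ≤
      qRobin (d / f 0 + ε * logDerivVariation (η + N) f 0) (η + ε) u := by
  obtain ⟨K, hK⟩ := h.exists_abs_logDerivVariation_le (η + N)
  refine ⟨K ^ 2, sq_nonneg K, fun ε u hu => ?_⟩
  set k := logDerivVariation (η + N) f
  have hk0 : Tendsto k (𝓝[>] 0) (𝓝 (k 0)) :=
    (h.continuousOn_logDerivVariation (η + N) 0 self_mem_Ici).mono Ioi_subset_Ici_self
  refine hu.mul_np_le_of_riccati (B := 2 + 2 * |η| + |ε| * K)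
    (hu.integrableOn_sub_sq_mul_sq (η + ε)) (h.tendsto_div.add (hk0.const_mul ε))
    (fun t ht => (h.hasDerivAt_div ht).fun_add
      ((h.hasDerivAt_logDerivVariation (η + N) ht).const_mul ε)) (fun t ht => ?_) ?_
  · have hk := mul_le_mul_of_nonneg_left (sq_le_sq' (abs_le.1 (hK t ht.le)).1
      (abs_le.1 (hK t ht.le)).2) (sq_nonneg ε)
    linarith [sq_nonneg ε]
  · filter_upwards [eventually_neg_two_mul_le_of_riccati fun t ht => h.hasDerivAt_div ht,
      eventually_ge_atTop 0] with t hquot ht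
    have hk : |ε * k t| ≤ |ε| * K := by
      rw [abs_mul]
      exact mul_le_mul_of_nonneg_left (hK t ht) (abs_nonneg ε)
    nlinarith [neg_abs_le (ε * k t), neg_abs_le η, abs_nonneg η, (abs_nonneg (ε * k t)).trans hk]

end IsHalfLineGroundState

lemma isHalfLineGroundState_comp_neg {η c d : ℝ} {f g : ℝ → ℝ} (hcont : ContinuousOn f (Iic 0))
    (hpos : ∀ t, t ≤ 0 → 0 < f t) (hint : IntegrableOn (fun t => f t ^ 2) (Iio 0))
    (hderiv : ∀ t, t < 0 → HasDerivAt f (g t) t)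
    (hderiv' : ∀ t, t < 0 → HasDerivAt g (((t - η) ^ 2 - c) * f t) t)
    (hlim : Tendsto g (𝓝[<] 0) (𝓝 d)) :
    IsHalfLineGroundState (-η) c (-d) (fun t => f (-t)) (fun t => -g (-t)) where
  continuousOn := hcont.comp continuous_neg.continuousOn fun _ ht =>
    mem_Iic.2 (neg_nonpos.2 ht)
  pos t ht := hpos (-t) (neg_nonpos.2 ht)
  integrableOn_sq := by
    rw [← neg_zero] at hint
    exact hint.comp_neg_Ioi
  hasDerivAt t ht := ((hderiv (-t) (neg_neg_iff_pos.2 ht)).scomp t (hasDerivAt_neg t)).congr_deriv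
    (neg_one_smul ℝ _)
  hasDerivAt_deriv t ht := by
    refine ((hderiv' (-t) (neg_neg_iff_pos.2 ht)).scomp t (hasDerivAt_neg t)).fun_neg.congr_deriv ?_
    rw [smul_eq_mul]
    ring
  tendsto_deriv := by
    rw [← neg_zero] at hlim
    exact (hlim.comp tendsto_neg_nhdsGT).neg

end HalfLine

section Interface

variable {a m α ξ : ℝ} {u : ℝ → ℝ}

lemma nR_eq_np_add_np_comp_neg (hu : Integrable fun t => u t ^ 2) :
    nR u = np u + np (fun t => u (-t)) := by
  rw [nR, np, np, ← integral_Iio_zero_eq_integral_Ioi_comp_neg (fun t => u t ^ 2),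
    ← integral_Iic_eq_integral_Iio, add_comm,
    intervalIntegral.integral_Iic_add_Ioi hu.integrableOn hu.integrableOn]

lemma MemB1.QI_eq_qRobin_add_qRobin_comp_neg (hu : MemB1 u) {γ γ' : ℝ} (hγ : γ + 1 / m * γ' = 0) :
    QI a m α ξ u = (qRobin γ ξ u - α * np u) +
      (1 / m * qRobin γ' (-ξ) (fun t => u (-t)) + a * α * np (fun t => u (-t))) := by
  have hright := hu.memB1p
  have hleft := hu.comp_neg.memB1p
  rw [QI, integral_Iio_zero_eq_integral_Ioi_comp_neg, integral_sub (hright.integrableOn_qRobin ξ)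
    (hright.2.1.const_mul α), integral_const_mul]
  have hreflect : ∫ t in Ioi (0 : ℝ), (1 / m * (deriv u (-t) ^ 2 + (-t - ξ) ^ 2 * u (-t) ^ 2) +
      a * α * u (-t) ^ 2) = 1 / m * (∫ t in Ioi (0 : ℝ), (deriv (fun t => u (-t)) t ^ 2 +
        (t - -ξ) ^ 2 * u (-t) ^ 2)) + a * α * np (fun t => u (-t)) := by
    rw [np, ← integral_const_mul, ← integral_const_mul,
      ← integral_add ((hleft.integrableOn_qRobin (-ξ)).const_mul _) (hleft.2.1.const_mul _)]
    congr 1 with t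
    rw [deriv_comp_neg]
    ring
  rw [hreflect]
  simp only [qRobin, np, neg_zero]
  linear_combination -(u 0 ^ 2 * hγ)

lemma MemB1.neg_mul_nR_le_QI (hu : MemB1 u) (hm : 0 ≤ m) :
    -(|α| + |a * α|) * nR u ≤ QI a m α ξ u := by
  rw [nR_eq_np_add_np_comp_neg hu.2.1,
    hu.QI_eq_qRobin_add_qRobin_comp_neg (γ := 0) (γ' := 0) (by simp)]
  have hright := np_nonneg u
  have hleft := np_nonneg fun t => u (-t)
  have hkinetic := mul_nonneg (one_div_nonneg.2 hm) (qRobin_zero_nonneg (-ξ) fun t => u (-t))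
  nlinarith [qRobin_zero_nonneg ξ u, le_abs_self α, neg_abs_le (a * α), abs_nonneg α,
    abs_nonneg (a * α)]

lemma MemB1.QI_add_add_QI_sub_le (hu : MemB1 u) (hm : 0 ≤ m) (ε : ℝ) :
    QI a m α (ξ + ε) u + QI a m α (ξ - ε) u ≤
      2 * QI a m α ξ u + 2 * (1 + 1 / m) * ε ^ 2 * nR u := by
  have hsplit := fun ξ => hu.QI_eq_qRobin_add_qRobin_comp_neg (a := a) (m := m) (α := α) (ξ := ξ)
    (γ := 0) (γ' := 0) (by simp)
  have hright := hu.memB1p.qRobin_add_add_qRobin_sub 0 ξ ε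
  have hleft := congrArg (1 / m * ·) (hu.comp_neg.memB1p.qRobin_add_add_qRobin_sub 0 (-ξ) ε)
  simp only [mul_add] at hleft
  rw [hsplit, hsplit, hsplit, nR_eq_np_add_np_comp_neg hu.2.1, neg_add', neg_sub',
    sub_neg_eq_add]
  have hcross : 0 ≤ ε ^ 2 * np (fun t => u (-t)) + 1 / m * (ε ^ 2 * np u) := by
    have := np_nonneg u
    have := np_nonneg fun t => u (-t)
    positivity
  linarith

lemma exists_memB1_nR_ne_zero : ∃ u, MemB1 u ∧ nR u ≠ 0 := by
  have hsq : ∀ t : ℝ, Real.exp (-t ^ 2) ^ 2 = Real.exp (-2 * t ^ 2) := fun t => by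
    rw [← Real.exp_nat_mul]
    congr 1
    push_cast
    ring
  have hderiv : ∀ t : ℝ, HasDerivAt (fun t => Real.exp (-t ^ 2))
      (Real.exp (-t ^ 2) * (-(2 * t))) t := fun t => by
    simpa using ((hasDerivAt_id t).fun_pow 2).fun_neg.exp
  have hint : Integrable fun t : ℝ => Real.exp (-t ^ 2) ^ 2 := by
    simpa only [hsq] using integrable_exp_neg_mul_sq two_pos
  have hmoment : Integrable fun t : ℝ => t ^ 2 * Real.exp (-t ^ 2) ^ 2 := by
    simpa [hsq] using integrable_rpow_mul_exp_neg_mul_sq two_pos (s := 2) (by norm_num)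
  refine ⟨fun t => Real.exp (-t ^ 2), ⟨fun t => (hderiv t).differentiableAt, hint, ?_, hmoment⟩, ?_⟩
  · refine (hmoment.const_mul 4).congr (Eventually.of_forall fun t => ?_)
    simp only [(hderiv t).deriv]
    ring
  · simp only [nR, hsq, integral_gaussian]
    positivity

lemma nR_nonneg (u : ℝ → ℝ) : 0 ≤ nR u := integral_nonneg fun _ => sq_nonneg _

lemma le_mu1 {L : ℝ} (h : ∀ u, MemB1 u → L * nR u ≤ QI a m α ξ u) : L ≤ mu1 a m α ξ := by
  obtain ⟨u₀, hu₀, hne₀⟩ := exists_memB1_nR_ne_zero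
  refine le_csInf ⟨_, u₀, hu₀, hne₀, rfl⟩ ?_
  rintro _ ⟨u, hu, hne, rfl⟩
  rw [le_div_iff₀ ((nR_nonneg u).lt_of_ne' hne)]
  exact h u hu

lemma mu1_mul_nR_le_QI (hm : 0 ≤ m) (hu : MemB1 u) : mu1 a m α ξ * nR u ≤ QI a m α ξ u := by
  by_cases hne : nR u = 0
  · simpa [hne] using hu.neg_mul_nR_le_QI (a := a) (α := α) (ξ := ξ) hm
  · rw [← le_div_iff₀ ((nR_nonneg u).lt_of_ne' hne)]
    refine csInf_le ⟨-(|α| + |a * α|), ?_⟩ ⟨u, hu, hne, rfl⟩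
    rintro _ ⟨v, hv, hvne, rfl⟩
    rw [le_div_iff₀ ((nR_nonneg v).lt_of_ne' hvne)]
    exact hv.neg_mul_nR_le_QI hm

lemma mu1_add_add_mu1_sub_le (hm : 0 ≤ m) (a α ξ ε : ℝ) :
    mu1 a m α (ξ + ε) + mu1 a m α (ξ - ε) ≤ 2 * mu1 a m α ξ + 2 * (1 + 1 / m) * ε ^ 2 := by
  suffices (mu1 a m α (ξ + ε) + mu1 a m α (ξ - ε) - 2 * (1 + 1 / m) * ε ^ 2) / 2 ≤
    mu1 a m α ξ by linarith
  refine le_mu1 fun u hu => ?_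
  linarith [mu1_mul_nR_le_QI hm hu (a := a) (α := α) (ξ := ξ + ε),
    mu1_mul_nR_le_QI hm hu (a := a) (α := α) (ξ := ξ - ε),
    hu.QI_add_add_QI_sub_le hm ε (a := a) (α := α) (ξ := ξ)]

variable {η μ d₁ d₂ : ℝ} {f₁ f₂ g₁ g₂ : ℝ → ℝ}

lemma exists_sub_le_mu1 (hm : 0 < m) (hright : IsHalfLineGroundState η (α + μ) d₁ f₁ g₁)
    (hleft : IsHalfLineGroundState (-η) (m * (μ - a * α)) d₂ f₂ g₂) (hcont : f₂ 0 = f₁ 0)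
    (htrans : d₁ + 1 / m * d₂ = 0) :
    ∃ C, ∀ ε, μ - 2 * ((tailMoment η f₁ 0 - 1 / m * tailMoment (-η) f₂ 0) / (np f₁ + np f₂)) * ε -
      C * ε ^ 2 ≤ mu1 a m α (η + ε) := by
  set N := (tailMoment η f₁ 0 - 1 / m * tailMoment (-η) f₂ 0) / (np f₁ + np f₂)
  obtain ⟨C₁, hC₁, hCle₁⟩ := hright.exists_forall_mul_np_le_qRobin N
  obtain ⟨C₂, hC₂, hCle₂⟩ := hleft.exists_forall_mul_np_le_qRobin (-(m * N))
  refine ⟨C₁ + C₂ / m, fun ε => le_mu1 fun u hu => ?_⟩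
  have hmoment : N * (np f₁ + np f₂) = tailMoment η f₁ 0 - 1 / m * tailMoment (-η) f₂ 0 :=
    div_mul_cancel₀ _ (add_pos hright.np_pos hleft.np_pos).ne'
  have hrobin : (d₁ / f₁ 0 + ε * logDerivVariation (η + N) f₁ 0) + 1 / m *
      (d₂ / f₂ 0 + -ε * logDerivVariation (-η + -(m * N)) f₂ 0) = 0 := by
    have hf0 := (hright.pos 0 le_rfl).ne'
    rw [logDerivVariation, logDerivVariation, hright.tailMoment_add_zero,
      hleft.tailMoment_add_zero, hcont]
    field_simp at htrans hmoment ⊢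
    linear_combination f₁ 0 * htrans - 2 * ε * hmoment
  rw [hu.QI_eq_qRobin_add_qRobin_comp_neg hrobin, nR_eq_np_add_np_comp_neg hu.2.1, neg_add]
  have hboundR := hCle₁ ε u hu.memB1p
  have hboundL := mul_le_mul_of_nonneg_left (hCle₂ (-ε) _ hu.comp_neg.memB1p)
    (one_div_nonneg.2 hm.le)
  have hscale : 1 / m * ((m * (μ - a * α) - 2 * -ε * -(m * N) - C₂ * (-ε) ^ 2) *
      np fun t => u (-t)) = (μ - a * α - 2 * ε * N - C₂ / m * ε ^ 2) * np fun t => u (-t) := by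
    field_simp
  have herror : 0 ≤ C₂ / m * ε ^ 2 * np u + C₁ * ε ^ 2 * np (fun t => u (-t)) := by
    have := np_nonneg u
    have := np_nonneg fun t => u (-t)
    positivity
  linarith

theorem hasDerivAt_mu1 (hm : 0 < m) (hμ : μ = mu1 a m α η)
    (hright : IsHalfLineGroundState η (α + μ) d₁ f₁ g₁)
    (hleft : IsHalfLineGroundState (-η) (m * (μ - a * α)) d₂ f₂ g₂) (hcont : f₂ 0 = f₁ 0)
    (htrans : d₁ + 1 / m * d₂ = 0) :
    HasDerivAt (fun ξ => mu1 a m α ξ)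
      (-2 * ((tailMoment η f₁ 0 - 1 / m * tailMoment (-η) f₂ 0) / (np f₁ + np f₂))) η := by
  obtain ⟨C, hC⟩ := exists_sub_le_mu1 hm hright hleft hcont htrans
  refine hasDerivAt_of_quadratic_bounds (C := C) (fun ε => ?_)
    (mu1_add_add_mu1_sub_le hm.le a α η)
  linarith [hC ε]

end Interface

theorem first_moment_identity_general (a m α η μ dplus dminus : ℝ) (f g : ℝ → ℝ)
    (hm : 0 < m)
    (hcrit : deriv (fun ξ => mu1 a m α ξ) η = 0)
    (hμ : μ = mu1 a m α η)
    (hfc : Continuous f)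
    (hfg : ∀ t : ℝ, t ≠ 0 → HasDerivAt f (g t) t)
    (hdp : Tendsto g (𝓝[>] (0 : ℝ)) (𝓝 dplus))
    (hdm : Tendsto g (𝓝[<] (0 : ℝ)) (𝓝 dminus))
    (htrans : dplus = (1 / m) * dminus)
    (hODEp : ∀ t : ℝ, 0 < t → HasDerivAt g (((t - η) ^ 2 - α - μ) * f t) t)
    (hODEm : ∀ t : ℝ, t < 0 → HasDerivAt g (((t - η) ^ 2 + m * (a * α - μ)) * f t) t)
    (hpos : ∀ t : ℝ, 0 < f t)
    (hint : Integrable fun t => f t ^ 2) :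
    (∫ t in Ioi (0 : ℝ), (t - η) * f t ^ 2) +
      (1 / m) * ∫ t in Iio (0 : ℝ), (t - η) * f t ^ 2 = 0 := by
  have hODEp' : ∀ t, 0 < t → HasDerivAt g (((t - η) ^ 2 - (α + μ)) * f t) t := fun t ht =>
    (hODEp t ht).congr_deriv (by ring)
  have hODEm' : ∀ t, t < 0 → HasDerivAt g (((t - η) ^ 2 - m * (μ - a * α)) * f t) t :=
    fun t ht => (hODEm t ht).congr_deriv (by ring)
  have hright : IsHalfLineGroundState η (α + μ) dplus f g :=
    ⟨hfc.continuousOn, fun t _ => hpos t, hint.integrableOn, fun t ht => hfg t ht.ne', hODEp', hdp⟩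
  have hleft := isHalfLineGroundState_comp_neg hfc.continuousOn (fun t _ => hpos t)
    hint.integrableOn (fun t ht => hfg t ht.ne) hODEm' hdm
  have hderiv := hasDerivAt_mu1 hm hμ hright hleft (by rw [neg_zero]) (by rw [htrans]; ring)
  have hmoment : tailMoment η f 0 - 1 / m * tailMoment (-η) (fun t => f (-t)) 0 = 0 := by
    simpa [(add_pos hright.np_pos hleft.np_pos).ne', hcrit] using hderiv.deriv
  rw [tailMoment_neg_comp_neg_zero, tailMoment] at hmoment
  linarith

/-- first-moment identity at a critical point `η` of `ξ ↦ μ₁(a,m,α;ξ)`: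
`∫₀^∞ (t-η) f(t)² dt + (1/m)∫_{-∞}^0 (t-η) f(t)² dt = 0`, where `f` is the positive
normalized ground state of `H[a,m,α;η]`. -/
theorem first_moment_identity (a m α η μ dplus dminus : ℝ) (f g : ℝ → ℝ)
    (ha : 0 < a) (hm : 0 < m) (hα : 0 < α)
    (hcrit : deriv (fun ξ => mu1 a m α ξ) η = 0)
    (hμ : μ = mu1 a m α η)
    (hfc : Continuous f)
    (hfg : ∀ t : ℝ, t ≠ 0 → HasDerivAt f (g t) t)
    (hdp : Tendsto g (𝓝[>] (0:ℝ)) (𝓝 dplus))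
    (hdm : Tendsto g (𝓝[<] (0:ℝ)) (𝓝 dminus))
    (htrans : dplus = (1/m) * dminus)
    (hODEp : ∀ t : ℝ, 0 < t → HasDerivAt g (((t - η)^2 - α - μ) * f t) t)
    (hODEm : ∀ t : ℝ, t < 0 → HasDerivAt g (((t - η)^2 + m * (a * α - μ)) * f t) t)
    (hpos : ∀ t : ℝ, 0 < f t)
    (hnorm : (∫ t : ℝ, (f t)^2) = 1)
    (hi1 : IntegrableOn (fun t => (t - η) * (f t)^2) (Ioi 0))
    (hi2 : IntegrableOn (fun t => (t - η) * (f t)^2) (Iio 0)) :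
    (∫ t in Ioi (0:ℝ), (t - η) * (f t)^2) +
      (1/m) * ∫ t in Iio (0:ℝ), (t - η) * (f t)^2 = 0 :=
  first_moment_identity_general a m α η μ dplus dminus f g hm hcrit hμ hfc hfg hdp hdm htrans
    hODEp hODEm hpos (integrable_of_integral_eq_one hnorm)
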